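/- Conserved tensor of a spacetime-dependent field theory (Subsection 4.4, eqs. (4.23)–(4.25)): let a : (Fin D → ℝ) → ℝ be a smooth function, σ ∈ ℝ, and let φ : (Fin D → ℝ) → ℝ be a smooth field such that A := φ + a satisfies □A x + σ·A x = 0 for all x (this PDE is the Euler–Lagrange equation of the spacetime-dependent Lagrangian L = (1/2)∂^μφ∂_μφ + ∂^μa·∂_μφ − (1/2)σφ² − σaφ + const). Then for each fixed ν, the tensor K^μ_ν x := ∂^μ A x · ∂_ν A x − (1/2)·(if μ = ν then Σ_{α,β} η α β·∂_α A x·∂_β A x − σ·(A x)² else 0) is conserved: Σ_μ ∂_μ (fun y ↦ K^μ_ν y) x = 0 for all x. -/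

import Mathlib

open scoped BigOperators

noncomputable section

/-- Minkowski metric on `Fin D`. -/
def eta (D : ℕ) (μ ν : Fin D) : ℝ :=
  if μ = ν then (if (μ : ℕ) = 0 then 1 else -1) else 0

/-- Spacetime partial derivative `∂_μ F x`. -/
def pd {D : ℕ} (F : (Fin D → ℝ) → ℝ) (μ : Fin D) (x : Fin D → ℝ) : ℝ :=
  fderiv ℝ F x (Pi.single μ 1)

/-- Raised-index partial derivative `∂^μ F x`. -/
def pdu {D : ℕ} (F : (Fin D → ℝ) → ℝ) (μ : Fin D) (x : Fin D → ℝ) : ℝ :=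
  ∑ ν, eta D μ ν * pd F ν x

/-- d'Alembertian `□F x`. -/
def box {D : ℕ} (F : (Fin D → ℝ) → ℝ) (x : Fin D → ℝ) : ℝ :=
  ∑ μ, pd (fun y => pdu F μ y) μ x

def sg (D : ℕ) (μ : Fin D) : ℝ := if (μ : ℕ) = 0 then 1 else -1

lemma eta_eq (D : ℕ) (μ ν : Fin D) : eta D μ ν = if μ = ν then sg D μ else 0 := rfl

lemma pdu_eq {D : ℕ} (F : (Fin D → ℝ) → ℝ) (μ : Fin D) (x : Fin D → ℝ) :
    pdu F μ x = sg D μ * pd F μ x := by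
  simp [pdu, eta_eq]

lemma pd_contDiff {D : ℕ} {F : (Fin D → ℝ) → ℝ} (hF : ContDiff ℝ (⊤ : ℕ∞) F) (μ : Fin D) :
    ContDiff ℝ (⊤ : ℕ∞) (pd F μ) := by
  have h : ContDiff ℝ (⊤ : ℕ∞) (fderiv ℝ F) := hF.fderiv_right (by simp)
  exact h.clm_apply contDiff_const

lemma pd_symm {D : ℕ} {F : (Fin D → ℝ) → ℝ} (hF : ContDiff ℝ (⊤ : ℕ∞) F) (μ ν : Fin D)
    (x : Fin D → ℝ) : pd (pd F μ) ν x = pd (pd F ν) μ x := by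
  have h : ContDiff ℝ (⊤ : ℕ∞) (fderiv ℝ F) := hF.fderiv_right (by simp)
  have hd : DifferentiableAt ℝ (fderiv ℝ F) x := (h.differentiable (by simp)) x
  have key : ∀ α β : Fin D, pd (pd F α) β x
      = fderiv ℝ (fderiv ℝ F) x (Pi.single β 1) (Pi.single α 1) := by
    intro α β
    have := (hd.hasFDerivAt.clm_apply (hasFDerivAt_const (Pi.single α (1:ℝ)) x)).fderiv
    unfold pd
    rw [this]
    simp
  rw [key, key]
  have hs : IsSymmSndFDerivAt ℝ F x :=
    hF.contDiffAt.isSymmSndFDerivAt (by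
      simp only [minSmoothness_of_isRCLikeNormedField]
      exact WithTop.coe_le_coe.2 (le_top : (2 : ℕ∞) ≤ ⊤))
  exact hs _ _

lemma main_aux {D : ℕ} (A : (Fin D → ℝ) → ℝ) (hA : ContDiff ℝ (⊤ : ℕ∞) A) (σ : ℝ)
    (hEL : ∀ x, box A x + σ * A x = 0) (ν : Fin D) (x : Fin D → ℝ) :
    ∑ μ, pd (fun y => pdu A μ y * pd A ν y - (1/2) * (if μ = ν then
      (∑ α, ∑ β, eta D α β * pd A α y * pd A β y) - σ * (A y)^2 else 0)) μ x = 0 := by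
  have hAx : HasFDerivAt A (fderiv ℝ A x) x :=
    ((hA.differentiable (by simp)) x).hasFDerivAt
  have hp : ∀ α, HasFDerivAt (pd A α) (fderiv ℝ (pd A α) x) x := fun α =>
    (((pd_contDiff hA α).differentiable (by simp)) x).hasFDerivAt
  have hbox : box A x = ∑ μ, sg D μ * pd (pd A μ) μ x := by
    unfold box
    refine Finset.sum_congr rfl fun μ _ => ?_
    simp only [pdu_eq]
    have := ((hp μ).const_mul (sg D μ)).fderiv
    conv_lhs => unfold pd
    erw [this]
    simp [pd]
  have term : ∀ μ, pd (fun y => pdu A μ y * pd A ν y - (1/2) * (if μ = ν then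
      (∑ α, ∑ β, eta D α β * pd A α y * pd A β y) - σ * (A y)^2 else 0)) μ x
      = sg D μ * pd (pd A μ) μ x * pd A ν x + sg D μ * pd A μ x * pd (pd A μ) ν x
        - (if μ = ν then (∑ α, sg D α * pd A α x * pd (pd A α) ν x)
            - σ * A x * pd A ν x else 0) := by
    intro μ
    have h1 := ((hp μ).const_mul (sg D μ)).mul (hp ν)
    have e : ∀ y, (∑ α, ∑ β, eta D α β * pd A α y * pd A β y)
        = ∑ α, sg D α * (pd A α y * pd A α y) := by
      intro y
      simp [eta_eq, ite_mul, mul_assoc]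
    simp only [pdu_eq, e]
    rw [pd_symm hA μ ν]
    by_cases h : μ = ν
    · subst h
      simp only [if_true]
      have h2 := HasFDerivAt.fun_sum (u := Finset.univ) (fun α _ =>
        ((hp α).mul (hp α)).const_mul (sg D α))
      have h3 := (h1.sub ((h2.sub ((hAx.pow 2).const_mul σ)).const_mul (1/2))).fderiv
      have h4 := congrArg (fun L => L (Pi.single μ (1:ℝ))) h3
      refine Eq.trans h4 ?_
      have h5 : ∑ α, (sg D α * (pd A α x * pd (pd A α) μ x) + sg D α * (pd A α x * pd (pd A α) μ x))
          = 2 * ∑ α, sg D α * pd A α x * pd (pd A α) μ x := by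
        rw [Finset.mul_sum]
        exact Finset.sum_congr rfl fun _ _ => by ring
      simp
      change _ - 2⁻¹ * ((∑ α, (sg D α * (pd A α x * pd (pd A α) μ x)
        + sg D α * (pd A α x * pd (pd A α) μ x))) - _) = _
      rw [h5]
      simp only [pd]
      ring
    · simp only [h, if_false]
      have h4 := congrArg (fun L => L (Pi.single μ (1:ℝ))) h1.fderiv
      simp only [mul_zero, sub_zero]
      refine Eq.trans h4 ?_
      simp [pd]
      ring
  rw [Finset.sum_congr rfl fun μ _ => term μ]
  rw [Finset.sum_sub_distrib, Finset.sum_add_distrib, ← Finset.sum_mul, ← hbox]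
  simp
  linear_combination (pd A ν x) * hEL x

/-- Conserved tensor of the spacetime-dependent field theory of Subsection 4.4
(eqs. (4.23)–(4.25)). -/
theorem spacetime_dependent_theory_conserved_tensor {D : ℕ} (hD : 1 ≤ D)
    (a : (Fin D → ℝ) → ℝ) (ha : ContDiff ℝ (⊤ : ℕ∞) a) (σ : ℝ)
    (φ : (Fin D → ℝ) → ℝ) (hφ : ContDiff ℝ (⊤ : ℕ∞) φ)
    (hEL : ∀ x, box (fun y => φ y + a y) x + σ * (φ x + a x) = 0) :
    ∀ (ν : Fin D) (x : Fin D → ℝ),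
      ∑ μ, pd (fun y =>
        pdu (fun z => φ z + a z) μ y * pd (fun z => φ z + a z) ν y -
          (1/2) * (if μ = ν then
            (∑ α, ∑ β, eta D α β * pd (fun z => φ z + a z) α y * pd (fun z => φ z + a z) β y) -
              σ * (φ y + a y)^2
          else 0)) μ x = 0 := by
  intro ν x
  exact main_aux (fun z => φ z + a z) (hφ.add ha) σ hEL ν x

end
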